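/- Let D ⊆ 𝔽_q and let F ∈ 𝔽_q[X,Y,Z] have degree at most q−1 in each variable. Then the following are equivalent: (i) there exists a codeword c ∈ C(2,q) whose support is contained in the union of the line X = 0 and the lines Y = dX with d ∈ D, such that F(x,y,z) = c((x,y,z)) for every nonzero vector (x,y,z) ∈ 𝔽_q³ and the monomial X^{q−1}Y^{q−1}Z^{q−1} does not occur in F; (ii) F takes only values in the prime subfield 𝔽_p ⊆ 𝔽_q on 𝔽_q³, and F(X,Y,Z) = G(X,Y,Z)·∏_{d̄ ∈ 𝔽_q∖D} (Y − d̄X) + F(0,0,0)·(1 − X^{q−1}), where G is either a homogeneous polynomial of degree |D| − 1 or the zero polynomial. -/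

import Mathlib

/-!
A line `l` of `PG(2,q)` is given on nonzero vectors by `1 - l(X) ^ (q-1)`, so a codeword is given by
`H + f` with `H` homogeneous of degree `q - 1` and `f ∈ 𝔽_p`. A reduced polynomial without the
monomial `(XYZ) ^ (q-1)` is determined by its values off the origin
(`eq_zero_of_eval_ne_zero`), so `F = H + f` and `f = F(0)`. The form `K = H + f X ^ (q-1)` vanishes at
`(1, d, z)` for `d ∉ D`, hence is divisible by the pairwise coprime forms `Y - dX`, and the cofactor
is homogeneous of degree `q - 1 - (q - |D|) = |D| - 1`.

Conversely, such an `F` is `H + f` with `H` a form of degree `q - 1` with values in `𝔽_p`, and the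
point is to show that it comes from the code (`mem_code_of_poly`). Since `H ^ p = H` as functions,
the exponents of `H` are closed under rotation of base-`p` digits; as all of them have degree
`q - 1`, the entries of each exponent add up without carries and the multinomial coefficient is
nonzero modulo `p` (`multinomial_ne_zero_of_coeff_ne_zero`). If weights `w` on the points are
orthogonal to all lines, the polynomial `∑ w(P) (1 - (P · A) ^ (q-1))` in `A` vanishes off the origin,
hence identically, so its coefficients show that `w` is orthogonal to the constant function and to
all monomials of `H`. So `w` is orthogonal to `H + f`, which therefore lies in the code.
-/

attribute [local instance] Classical.propDecidable

noncomputable section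

/-- Points of `PG(2,q)`: 1-dimensional subspaces of `F³`. -/
abbrev PGPoint (F : Type) [Field F] := Projectivization F (Fin 3 → F)

instance (F : Type) [Field F] [Fintype F] : Finite (PGPoint F) := Quotient.finite _

variable {F : Type} [Field F]

/-- Incidence between a line with dual coordinates `l` and a point `P` of `PG(2,q)`. -/
def PGIncident (l P : PGPoint F) : Prop := ∑ i, l.rep i * P.rep i = 0

/-- The number of points of the multiset `M`, counted with multiplicity, on the line `l`. -/
def lineMeets (M : Multiset (PGPoint F)) (l : PGPoint F) : ℕ :=
  Multiset.countP (PGIncident l) M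

/-- The multiset of all points of the line `l`, each with multiplicity one. -/
def pgLinePts [Fintype F] (l : PGPoint F) : Multiset (PGPoint F) :=
  (Set.toFinite {P | PGIncident l P}).toFinset.val

/-- The characteristic function (with values in `𝔽_p`) of the line `l`. -/
def chi (p : ℕ) (l : PGPoint F) : PGPoint F → ZMod p :=
  fun P => if PGIncident l P then 1 else 0

/-- The code `C(2,q)`: the `𝔽_p`-linear span of the characteristic functions of lines. -/
def code (p : ℕ) (F : Type) [Field F] : Submodule (ZMod p) (PGPoint F → ZMod p) :=
  Submodule.span (ZMod p) (Set.range (chi p))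

open MvPolynomial

/-! ### Reduced and homogeneous polynomials in three variables -/

lemma finsupp_degree_fin3 (m : Fin 3 →₀ ℕ) : m.degree = m 0 + m 1 + m 2 := by
  rw [Finsupp.degree_eq_sum, Fin.sum_univ_three]

lemma aeval_mul_left_of_isHomogeneous {σ R A : Type*} [CommRing R] [CommRing A]
    [Algebra R A] {n : ℕ} {K : MvPolynomial σ R} (hK : K.IsHomogeneous n) (a : A) (v : σ → A) :
    aeval (fun i => a * v i) K = a ^ n * aeval v K := by
  rw [aeval_def, aeval_def, eval₂_eq, eval₂_eq, Finset.mul_sum]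
  refine Finset.sum_congr rfl fun d hd => ?_
  have hdeg : ∑ i ∈ d.support, d i = n := (hK.degree_eq_sum_deg_support hd).symm
  rw [← hdeg, ← Finset.prod_pow_eq_pow_sum, mul_left_comm, ← Finset.prod_mul_distrib]
  simp only [mul_pow]

lemma eval_smul_of_isHomogeneous {K : MvPolynomial (Fin 3) F} {n : ℕ}
    (hK : K.IsHomogeneous n) (a : F) (v : Fin 3 → F) :
    eval (a • v) K = a ^ n * eval v K := by
  rw [← MvPolynomial.coe_aeval_eq_eval, ← MvPolynomial.coe_aeval_eq_eval]
  exact aeval_mul_left_of_isHomogeneous hK a v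

lemma mem_restrictDegree_of_totalDegree {K : MvPolynomial (Fin 3) F} {n : ℕ}
    (hK : K.totalDegree ≤ n) : K ∈ restrictDegree (Fin 3) F n := by
  rw [mem_restrictDegree]
  exact fun m hm i =>
    ((degreeOf_le_iff.1 le_rfl) m hm).trans ((degreeOf_le_totalDegree K i).trans hK)

lemma mem_restrictDegree_of_degreeOf {K : MvPolynomial (Fin 3) F} {n : ℕ}
    (hK : ∀ i, K.degreeOf i ≤ n) : K ∈ restrictDegree (Fin 3) F n := by
  rw [mem_restrictDegree]
  exact fun m hm i => ((degreeOf_le_iff.1 le_rfl) m hm).trans (hK i)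

section Finite

variable [Fintype F]

/-- The exponent `(q-1, q-1, q-1)`. -/
def topExp (F : Type) [Fintype F] : Fin 3 →₀ ℕ :=
  Finsupp.single 0 (Fintype.card F - 1) + Finsupp.single 1 (Fintype.card F - 1) +
    Finsupp.single 2 (Fintype.card F - 1)

lemma topExp_apply {E : Type} [Fintype E] (i : Fin 3) : topExp E i = Fintype.card E - 1 := by
  fin_cases i <;> simp [topExp]

lemma topExp_degree {E : Type} [Fintype E] : (topExp E).degree = 3 * (Fintype.card E - 1) := by
  rw [finsupp_degree_fin3]; simp only [topExp_apply]; ring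

lemma card_sub_one_pos : 0 < Fintype.card F - 1 := by
  have := Fintype.one_lt_card (α := F); omega

/-- A reduced polynomial without the monomial `(XYZ) ^ (q-1)` sums to zero over `F ^ 3`: every other
reduced monomial has an exponent `< q - 1`, and the corresponding power sum vanishes. -/
lemma sum_eval_of_coeff_top_eq_zero {R : MvPolynomial (Fin 3) F}
    (hR : R ∈ restrictDegree (Fin 3) F (Fintype.card F - 1))
    (htop : R.coeff (topExp F) = 0) : ∑ v : Fin 3 → F, eval v R = 0 := by
  simp only [eval_eq']
  rw [Finset.sum_comm]
  refine Finset.sum_eq_zero fun m hm => ?_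
  rw [← Finset.mul_sum]
  have hm' := (mem_restrictDegree _ _ _).1 hR m hm
  obtain ⟨i, hi⟩ : ∃ i, m i < Fintype.card F - 1 := by
    by_contra! hcon
    apply mem_support_iff.1 hm
    rw [← htop]
    congr 1
    ext i
    rw [topExp_apply]
    exact le_antisymm (hm' i) (hcon i)
  rw [← Fintype.prod_sum (fun i (x : F) => x ^ m i), Finset.prod_eq_zero (Finset.mem_univ i), mul_zero]
  exact FiniteField.sum_pow_lt_card_sub_one F _ hi

/-- A reduced polynomial without the monomial `(XYZ) ^ (q-1)` is determined by its values at the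
nonzero vectors. -/
lemma eq_zero_of_eval_ne_zero {R : MvPolynomial (Fin 3) F}
    (hR : R ∈ restrictDegree (Fin 3) F (Fintype.card F - 1))
    (htop : R.coeff (topExp F) = 0) (hv : ∀ v, v ≠ 0 → eval v R = 0) : R = 0 := by
  refine eq_zero_of_eval_eq_zero _ _ R (fun v => ?_) hR
  by_cases h : v = 0
  · subst h
    rw [← sum_eval_of_coeff_top_eq_zero hR htop]
    exact (Finset.sum_eq_single 0 (fun w _ hw => hv w hw) (by simp)).symm
  · exact hv v h

lemma coeff_topExp_eq_zero {R : MvPolynomial (Fin 3) F}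
    (hR : R.totalDegree ≤ Fintype.card F - 1) : R.coeff (topExp F) = 0 := by
  by_contra hne
  have h1 := le_totalDegree (mem_support_iff.2 hne)
  have h2 := topExp_degree (E := F)
  rw [Finsupp.degree_eq_sum] at h2
  rw [Finsupp.sum_fintype _ _ (by simp)] at h1
  have := card_sub_one_pos (F := F)
  omega

/-! ### Polynomials of codewords -/

variable (p : ℕ) [CharP F p]

lemma cast_chi (l : PGPoint F) (v : Fin 3 → F) (hv : v ≠ 0) :
    ZMod.castHom (dvd_refl p) F (chi p l (Projectivization.mk F v hv)) =
      1 - (∑ i, l.rep i * v i) ^ (Fintype.card F - 1) := by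
  obtain ⟨a, ha⟩ := Projectivization.exists_smul_eq_mk_rep F v hv
  have hiff : PGIncident l (Projectivization.mk F v hv) ↔ ∑ i, l.rep i * v i = 0 := by
    unfold PGIncident
    rw [← ha]
    have : ∑ i, l.rep i * (a • v) i = (a : F) * ∑ i, l.rep i * v i := by
      rw [Finset.mul_sum]
      refine Finset.sum_congr rfl fun i _ => ?_
      simp [Units.smul_def]; ring
    rw [this]; simp
  unfold chi
  by_cases h : ∑ i, l.rep i * v i = 0
  · rw [if_pos (hiff.2 h), h, zero_pow card_sub_one_pos.ne']; simp
  · rw [if_neg (fun h' => h (hiff.1 h')), FiniteField.pow_card_sub_one_eq_one _ h]; simp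

/-- A codeword is given by a polynomial of the form `H + f` with `H` homogeneous of degree `q - 1`,
because the line `l` is given by `1 - l(X) ^ (q-1)`. -/
lemma exists_poly_of_mem_code {c : PGPoint F → ZMod p} (hc : c ∈ code p F) :
    ∃ (f : ZMod p) (H : MvPolynomial (Fin 3) F), H.IsHomogeneous (Fintype.card F - 1) ∧
      ∀ (v : Fin 3 → F) (hv : v ≠ 0), eval v H + ZMod.castHom (dvd_refl p) F f =
        ZMod.castHom (dvd_refl p) F (c (Projectivization.mk F v hv)) := by
  unfold code at hc
  induction hc using Submodule.span_induction with
  | mem x hx =>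
    obtain ⟨l, rfl⟩ := hx
    refine ⟨1, -(∑ i, C (l.rep i) * X i) ^ (Fintype.card F - 1), ?_, fun v hv => ?_⟩
    · have h1 : (∑ i, C (l.rep i) * X i : MvPolynomial (Fin 3) F).IsHomogeneous 1 :=
        IsHomogeneous.sum _ _ _ fun i _ => isHomogeneous_C_mul_X _ _
      simpa using (h1.pow (Fintype.card F - 1)).neg
    · rw [cast_chi]; simp; ring
  | zero => exact ⟨0, 0, isHomogeneous_zero _ _ _, by simp⟩
  | add x y _ _ hx hy =>
    obtain ⟨f, H, hH, h1⟩ := hx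
    obtain ⟨f', H', hH', h2⟩ := hy
    refine ⟨f + f', H + H', hH.add hH', fun v hv => ?_⟩
    rw [Pi.add_apply, map_add, map_add, map_add, ← h1 v hv, ← h2 v hv]; ring
  | smul a x _ hx =>
    obtain ⟨f, H, hH, h1⟩ := hx
    refine ⟨a * f, C (ZMod.castHom (dvd_refl p) F a) * H, hH.C_mul _, fun v hv => ?_⟩
    rw [Pi.smul_apply, smul_eq_mul, map_mul, map_mul, map_mul, ← h1 v hv, eval_C]; ring

end Finite

/-! ### Divisibility by the lines `Y = dX` -/

section Divis

/-- If `K(X, dX, Z) = 0` then `Y - dX` divides `K`: the two substitutions agree modulo `Y - dX`. -/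
lemma sub_dvd_of_aeval_eq_zero (d : F) {K : MvPolynomial (Fin 3) F}
    (hK : aeval ![X 0, C d * X 0, X 2] K = (0 : MvPolynomial (Fin 3) F)) :
    X 1 - C d * X 0 ∣ K := by
  rw [← Ideal.mem_span_singleton, ← Ideal.Quotient.eq_zero_iff_mem]
  set I := Ideal.span {(X 1 - C d * X 0 : MvPolynomial (Fin 3) F)}
  have h : (Ideal.Quotient.mkₐ F I) = (Ideal.Quotient.mkₐ F I).comp
      (aeval ![X 0, C d * X 0, X 2]) := by
    apply MvPolynomial.algHom_ext
    intro i
    fin_cases i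
    · simp
    · simp only [AlgHom.comp_apply, aeval_X]
      exact Ideal.Quotient.eq.2 (Ideal.mem_span_singleton_self _)
    · simp
  have h2 := DFunLike.congr_fun h K
  rw [AlgHom.comp_apply, hK, map_zero] at h2
  exact h2

/-- Working in a field `E` containing `F[X,Y,Z]`, one has `K(X, dX, Z) = X ^ (q-1) * K(1, d, Z / X)`, and
`K(1, d, Z)` is the zero polynomial since its degree is less than the number `q` of its roots. -/
lemma aeval_eq_zero_of_eval_aux [Fintype F] {E : Type*} [Field E] [Algebra F E]
    (ι : MvPolynomial (Fin 3) F →ₐ[F] E) (hι : Function.Injective ι) (d : F) {K : MvPolynomial (Fin 3) F}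
    (hK : K.IsHomogeneous (Fintype.card F - 1)) (hz : ∀ z, eval ![1, d, z] K = 0) :
    aeval ![X 0, C d * X 0, X 2] K = (0 : MvPolynomial (Fin 3) F) := by
  set u : MvPolynomial (Fin 3) F := aeval ![1, C d, X 2] K with hu
  have hu0 : u = 0 := by
    refine eq_zero_of_eval_eq_zero _ _ u (fun v => ?_) (mem_restrictDegree_of_totalDegree ?_)
    · rw [← hz (v 2), hu, ← MvPolynomial.coe_aeval_eq_eval, ← MvPolynomial.coe_aeval_eq_eval]
      change ((aeval v).comp (aeval _)) K = aeval _ K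
      congr 1
      apply MvPolynomial.algHom_ext
      intro i
      fin_cases i <;> simp
    · rw [hu, aeval_def, eval₂_eq]
      refine totalDegree_finsetSum_le fun m hm => ?_
      refine (totalDegree_mul _ _).trans ?_
      have hdm : Fintype.card F - 1 = ∑ i ∈ m.support, m i := hK.degree_eq_sum_deg_support hm
      rw [hdm]
      have : (algebraMap F (MvPolynomial (Fin 3) F)) (coeff m K) = C (coeff m K) := rfl
      rw [this, totalDegree_C, zero_add]
      refine (totalDegree_finsetProd _ _).trans (Finset.sum_le_sum fun i _ => ?_)
      refine (totalDegree_pow _ _).trans ?_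
      have : (![1, C d, X 2] i : MvPolynomial (Fin 3) F).totalDegree ≤ 1 := by
        fin_cases i <;> simp
      nlinarith
  have hX : ι (X 0) ≠ 0 := by
    rw [Ne, map_eq_zero_iff ι hι]; exact X_ne_zero 0
  apply hι
  rw [map_zero]
  have h1 : ι (aeval ![X 0, C d * X 0, X 2] K) =
      aeval (fun i => ι (X 0) * ![1, ι (C d), ι (X 2) / ι (X 0)] i) K := by
    change (ι.comp (aeval _)) K = aeval _ K
    congr 1
    apply MvPolynomial.algHom_ext
    intro i
    fin_cases i
    · simp
    · simp [mul_comm]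
    · simp [mul_div_cancel₀ _ hX]
  have h2 : aeval ![1, ι (C d), ι (X 2) / ι (X 0)] K =
      aeval (fun _ => ι (X 2) / ι (X 0)) u := by
    rw [hu]
    change aeval _ K = ((aeval _).comp (aeval _)) K
    congr 1
    apply MvPolynomial.algHom_ext
    intro i
    fin_cases i
    · simp
    · simp only [AlgHom.comp_apply, aeval_X]
      simp
    · simp
  rw [h1, aeval_mul_left_of_isHomogeneous hK, h2, hu0, map_zero, mul_zero]

lemma aeval_eq_zero_of_eval [Fintype F] (d : F) {K : MvPolynomial (Fin 3) F}
    (hK : K.IsHomogeneous (Fintype.card F - 1)) (hz : ∀ z, eval ![1, d, z] K = 0) :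
    aeval ![X 0, C d * X 0, X 2] K = (0 : MvPolynomial (Fin 3) F) :=
  aeval_eq_zero_of_eval_aux
    (IsScalarTower.toAlgHom F _ (FractionRing (MvPolynomial (Fin 3) F)))
    (IsFractionRing.injective _ _) d hK hz

lemma isRelPrime_lines {d e : F} (hde : d ≠ e) :
    IsRelPrime (X 1 - C d * X 0 : MvPolynomial (Fin 3) F) (X 1 - C e * X 0) := by
  intro g h1 h2
  have hu : IsUnit (C (e - d) : MvPolynomial (Fin 3) F) :=
    (isUnit_iff_ne_zero.2 (sub_ne_zero.2 hde.symm)).map C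
  have h3 : g ∣ X 0 := by
    have := dvd_sub h1 h2
    have h4 : (X 1 - C d * X 0 : MvPolynomial (Fin 3) F) - (X 1 - C e * X 0) =
      C (e - d) * X 0 := by rw [C_sub]; ring
    rw [h4] at this
    exact (hu.dvd_mul_left).1 this
  have h5 : g ∣ X 1 := by
    have := dvd_add h1 (h3.mul_left (C d))
    simpa using this
  obtain ⟨k, hk⟩ := h3
  rcases (X_prime (R := F) (i := (0 : Fin 3))).irreducible.isUnit_or_isUnit hk with h | h
  · exact h
  · have h6 : (X 0 : MvPolynomial (Fin 3) F) ∣ X 1 := by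
      rw [hk]; exact (h.mul_right_dvd).2 h5
    simp [X_dvd_X] at h6

/-- A homogeneous divisor of a homogeneous polynomial has a homogeneous cofactor. When `n < m` the
polynomial `K` is zero, and the alternative `G = 0` is the one that holds. -/
lemma exists_homogeneous_factor {K P : MvPolynomial (Fin 3) F} {n m : ℕ}
    (hK : K.IsHomogeneous n) (hP : P.IsHomogeneous m) (hdvd : P ∣ K) :
    ∃ G, (G.IsHomogeneous (n - m) ∨ G = 0) ∧ K = G * P := by
  let := gradedAlgebra (σ := Fin 3) (R := F)
  obtain ⟨G, rfl⟩ := hdvd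
  have h1 : (DirectSum.decompose (homogeneousSubmodule (Fin 3) F) (P * G) n : MvPolynomial (Fin 3) F)
    = P * G := DirectSum.decompose_of_mem_same _ hK
  by_cases h : m ≤ n
  · rw [DirectSum.coe_decompose_mul_of_left_mem_of_le _ hP h] at h1
    exact ⟨_, Or.inl (SetLike.coe_mem (DirectSum.decompose (homogeneousSubmodule (Fin 3) F) G (n - m))),
      by rw [← h1, mul_comm]⟩
  · rw [DirectSum.coe_decompose_mul_of_left_mem_of_not_le _ hP h] at h1
    exact ⟨0, Or.inr rfl, by rw [← h1, zero_mul]⟩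

end Divis

/-! ### Digit rotation and multinomial coefficients -/

/-- Cyclic rotation of the `h` base-`p` digits of `n < p ^ h`: the lowest `t` digits become the
highest ones. -/
def digitShift (p h t n : ℕ) : ℕ := p ^ (h - t) * (n % p ^ t) + n / p ^ t

lemma digitShift_lt {p h t n : ℕ} (hp : 1 < p) (ht : t ≤ h) (hn : n < p ^ h) :
    digitShift p h t n < p ^ h := by
  have hpos : 0 < p := by omega
  have hA : 0 < p ^ t := pow_pos hpos t
  have h1 : n % p ^ t + 1 ≤ p ^ t := Nat.mod_lt n hA
  have hAB : p ^ (h - t) * p ^ t = p ^ h := by rw [← pow_add]; congr 1; omega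
  have h2 : n / p ^ t < p ^ (h - t) := by
    rw [Nat.div_lt_iff_lt_mul hA, hAB]; exact hn
  unfold digitShift
  calc _ < p ^ (h - t) * (n % p ^ t) + p ^ (h - t) := by omega
    _ = p ^ (h - t) * (n % p ^ t + 1) := by ring
    _ ≤ p ^ (h - t) * p ^ t := Nat.mul_le_mul_left _ h1
    _ = p ^ h := hAB

lemma digitShift_inj {p h t n n' : ℕ} (hp : 1 < p) (ht : t ≤ h) (hn : n < p ^ h)
    (hn' : n' < p ^ h) (heq : digitShift p h t n = digitShift p h t n') : n = n' := by
  have hpos : 0 < p := by omega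
  have hA : 0 < p ^ t := pow_pos hpos t
  have hB : 0 < p ^ (h - t) := pow_pos hpos _
  have hAB : p ^ (h - t) * p ^ t = p ^ h := by rw [← pow_add]; congr 1; omega
  have h1 : n / p ^ t < p ^ (h - t) := by
    rw [Nat.div_lt_iff_lt_mul hA, hAB]; exact hn
  have h2 : n' / p ^ t < p ^ (h - t) := by
    rw [Nat.div_lt_iff_lt_mul hA, hAB]; exact hn'
  unfold digitShift at heq
  have h3 : n % p ^ t = n' % p ^ t := by
    have := congrArg (· / p ^ (h - t)) heq
    simpa [Nat.mul_add_div hB, Nat.div_eq_of_lt h1, Nat.div_eq_of_lt h2] using this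
  have h4 : n / p ^ t = n' / p ^ t := by rw [h3] at heq; omega
  rw [← Nat.div_add_mod n (p ^ t), ← Nat.div_add_mod n' (p ^ t), h3, h4]

lemma pow_digitShift [Fintype F] {p h t : ℕ} (hcard : Fintype.card F = p ^ h) (ht : t ≤ h)
    (x : F) (n : ℕ) : x ^ digitShift p h t n = (x ^ n) ^ p ^ (h - t) := by
  have hAB : p ^ t * p ^ (h - t) = p ^ h := by rw [← pow_add]; congr 1; omega
  have hx : x ^ p ^ h = x := by rw [← hcard]; exact FiniteField.pow_card x
  calc x ^ digitShift p h t n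
      = x ^ (p ^ (h - t) * (n % p ^ t)) * x ^ (n / p ^ t) := by rw [digitShift, pow_add]
    _ = x ^ (p ^ (h - t) * (n % p ^ t)) * (x ^ p ^ h) ^ (n / p ^ t) := by rw [hx]
    _ = (x ^ (p ^ t * (n / p ^ t) + n % p ^ t)) ^ p ^ (h - t) := by
        rw [← hAB, ← pow_mul, ← pow_mul, ← pow_add]; congr 1; ring
    _ = _ := by rw [Nat.div_add_mod]

/-- If `i + j + k = p ^ h - 1` and the rotated numbers have the same sum `p ^ h - 1`, then
the truncations to the lowest `t` digits add up to `p ^ t - 1`. -/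
lemma sum_mod_eq {p h t i j k : ℕ} (hp : 1 < p) (hh : 1 ≤ h) (ht : t ≤ h)
    (hsum : i + j + k = p ^ h - 1)
    (hshift : digitShift p h t i + digitShift p h t j + digitShift p h t k = p ^ h - 1) :
    i % p ^ t + j % p ^ t + k % p ^ t = p ^ t - 1 := by
  have hpos : 0 < p := by omega
  have hA : 0 < p ^ t := pow_pos hpos t
  have hAB : p ^ (h - t) * p ^ t = p ^ h := by rw [← pow_add]; congr 1; omega
  have hq : 1 < p ^ h := Nat.one_lt_pow (by omega) hp
  unfold digitShift at hshift
  have hi := Nat.div_add_mod i (p ^ t)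
  have hj := Nat.div_add_mod j (p ^ t)
  have hk := Nat.div_add_mod k (p ^ t)
  generalize i % p ^ t = a at *
  generalize j % p ^ t = b at *
  generalize k % p ^ t = c at *
  generalize i / p ^ t = a' at *
  generalize j / p ^ t = b' at *
  generalize k / p ^ t = c' at *
  generalize p ^ t = A at *
  generalize p ^ (h - t) = B at *
  have e1 : A * (a' + b' + c') + (a + b + c) + 1 = p ^ h := by
    have : A * (a' + b' + c') + (a + b + c) = i + j + k := by rw [← hi, ← hj, ← hk]; ring
    omega
  have e2 : B * (a + b + c) + (a' + b' + c') + 1 = p ^ h := by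
    have : B * (a + b + c) + (a' + b' + c') =
      B * a + a' + (B * b + b') + (B * c + c') := by ring
    omega
  generalize p ^ h = q at *
  subst hAB
  have key : a + b + c + 1 = A := by
    zify at *
    have h0 : ((B : ℤ) * A - 1) ≠ 0 := by omega
    apply mul_left_cancel₀ h0
    linear_combination (A : ℤ) * e2 - e1
  omega

/-- Kummer's theorem: no carry occurs in `i + j`, so `p` does not divide the binomial coefficient. -/
lemma not_dvd_choose_of_mod {p h i j : ℕ} (hp : p.Prime) (hlt : i + j < p ^ h)
    (hmod : ∀ t < h, j % p ^ t + i % p ^ t < p ^ t) : ¬ p ∣ (i + j).choose j := by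
  have hne : (i + j).choose j ≠ 0 := (Nat.choose_pos (Nat.le_add_left j i)).ne'
  have hlog : Nat.log p (i + j) < h + 1 :=
    Nat.lt_succ_of_le ((Nat.log_mono_right hlt.le).trans (Nat.log_pow hp.one_lt h).le)
  have hmod' : ∀ t ≤ h, j % p ^ t + i % p ^ t < p ^ t := by
    intro t ht
    rcases ht.lt_or_eq with h1 | rfl
    · exact hmod t h1
    · exact (Nat.add_le_add (Nat.mod_le _ _) (Nat.mod_le _ _)).trans_lt (by omega)
  have h0 : ((i + j).choose j).factorization p = 0 := by
    rw [Nat.factorization_choose' hp hlog, Finset.card_eq_zero, Finset.filter_eq_empty_iff]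
    intro t ht
    have := hmod' t (by have := Finset.mem_Ico.1 ht; omega)
    omega
  intro hdvd
  exact (hp.factorization_pos_of_dvd hne hdvd).ne' h0

lemma not_dvd_multinomial {p h : ℕ} (hp : p.Prime) (m : Fin 3 →₀ ℕ)
    (hsum : m 0 + m 1 + m 2 = p ^ h - 1)
    (hmod : ∀ t < h, m 0 % p ^ t + m 1 % p ^ t + m 2 % p ^ t = p ^ t - 1) :
    ¬ p ∣ m.multinomial := by
  have hq : 0 < p ^ h := pow_pos hp.pos h
  have h1 : ¬ p ∣ (m 0 + m 1).choose (m 1) := by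
    refine not_dvd_choose_of_mod (h := h) hp (by omega) fun t ht => ?_
    have := hmod t ht
    have := pow_pos hp.pos t
    have := Nat.zero_le (m 2 % p ^ t)
    omega
  have h2 : ¬ p ∣ (m 0 + m 1 + m 2).choose (m 2) := by
    refine not_dvd_choose_of_mod (h := h) hp (by omega) fun t ht => ?_
    have := hmod t ht
    have := pow_pos hp.pos t
    have h3 : (m 0 + m 1) % p ^ t ≤ m 0 % p ^ t + m 1 % p ^ t := by
      rw [Nat.add_mod]; exact Nat.mod_le _ _
    omega
  have hm : m.multinomial = (m 0 + m 1 + m 2).choose (m 2) * (m 0 + m 1).choose (m 1) := by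
    rw [Finsupp.multinomial_eq_of_support_subset (Finset.subset_univ m.support)]
    have hs := Nat.multinomial_spec Finset.univ (m : Fin 3 → ℕ)
    rw [Fin.sum_univ_three, Fin.prod_univ_three] at hs
    have e1 := Nat.add_choose_mul_factorial_mul_factorial (m 0) (m 1)
    have e2 := Nat.add_choose_mul_factorial_mul_factorial (m 0 + m 1) (m 2)
    have hpos : 0 < (m 0).factorial * (m 1).factorial * (m 2).factorial := by positivity
    apply Nat.eq_of_mul_eq_mul_left hpos
    rw [hs, ← e2, ← e1]; ring
  rw [hm, hp.dvd_mul]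
  tauto

/-- If `H` is reduced and takes values in the prime field then `H ^ (p ^ (h-t))` and `H` are the same
function; reducing the former rotates the digits of the exponents, so the set of exponents of `H`
is closed under digit rotation. -/
lemma coeff_digitShift_ne_zero [Fintype F] {p h t : ℕ} [Fact p.Prime] [CharP F p]
    (hcard : Fintype.card F = p ^ h) (ht : t ≤ h) {H : MvPolynomial (Fin 3) F}
    (hH : H ∈ restrictDegree (Fin 3) F (Fintype.card F - 1))
    (hval : ∀ v, (eval v H) ^ p = eval v H) {m : Fin 3 →₀ ℕ} (hm : H.coeff m ≠ 0)
    {m' : Fin 3 →₀ ℕ} (hm' : ∀ i, m' i = digitShift p h t (m i)) :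
    H.coeff m' ≠ 0 := by
  have hp : p.Prime := Fact.out
  have hq : 0 < p ^ h := pow_pos hp.pos h
  have hlt : ∀ n ∈ H.support, ∀ i, n i < p ^ h := fun n hn i => by
    have := (mem_restrictDegree _ _ _).1 hH n hn i
    omega
  let sh : (Fin 3 →₀ ℕ) → (Fin 3 →₀ ℕ) := fun n =>
    Finsupp.equivFunOnFinite.symm fun i => digitShift p h t (n i)
  have hsh : ∀ n i, sh n i = digitShift p h t (n i) := fun n i => rfl
  have hmsh : m' = sh m := by ext i; rw [hm', hsh]
  let H' : MvPolynomial (Fin 3) F :=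
    ∑ n ∈ H.support, monomial (sh n) (H.coeff n ^ p ^ (h - t))
  have hval' : ∀ (s : ℕ) v, (eval v H) ^ p ^ s = eval v H := by
    intro s v
    induction s with
    | zero => simp
    | succ s ih => rw [pow_succ, pow_mul, ih, hval]
  have hHH' : H' = H := by
    rw [← sub_eq_zero]
    refine eq_zero_of_eval_eq_zero _ _ _ (fun v => ?_) (Submodule.sub_mem _ ?_ hH)
    · rw [map_sub, sub_eq_zero, ← hval' (h - t) v, eval_eq' v H, sum_pow_char_pow, map_sum]
      refine Finset.sum_congr rfl fun n _ => ?_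
      rw [eval_monomial, Finsupp.prod_fintype _ _ (by simp), mul_pow, ← Finset.prod_pow]
      congr 1
      refine Finset.prod_congr rfl fun i _ => ?_
      rw [hsh, pow_digitShift hcard ht]
    · refine Submodule.sum_mem _ fun n hn => ?_
      rw [mem_restrictDegree]
      intro s hs i
      have hs' : s = sh n := Finset.mem_singleton.1 (support_monomial_subset hs)
      rw [hs', hsh]
      have := digitShift_lt hp.one_lt ht (hlt n hn i)
      omega
  rw [← hHH', hmsh, coeff_sum, Finset.sum_eq_single m]
  · rw [coeff_monomial, if_pos rfl]
    exact pow_ne_zero _ hm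
  · intro n hn hne
    rw [coeff_monomial, if_neg]
    intro heq
    apply hne
    ext i
    refine digitShift_inj hp.one_lt ht (hlt n hn i) (hlt m (mem_support_iff.2 hm) i) ?_
    rw [← hsh, ← hsh, heq]
  · intro h0
    exact absurd (mem_support_iff.2 hm) h0

/-- The monomials of a form of degree `q - 1` with values in the prime field are those of
`(aX + bY + cZ) ^ (q-1)`: all digit rotations of the exponent have degree `q - 1`, so its entries
add up without carries. -/
lemma multinomial_ne_zero_of_coeff_ne_zero [Fintype F] {p h : ℕ} [Fact p.Prime] [CharP F p]
    (hh : 1 ≤ h) (hcard : Fintype.card F = p ^ h) {H : MvPolynomial (Fin 3) F}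
    (hH : H.IsHomogeneous (Fintype.card F - 1))
    (hval : ∀ v, (eval v H) ^ p = eval v H) {m : Fin 3 →₀ ℕ} (hm : H.coeff m ≠ 0) :
    (m.multinomial : F) ≠ 0 := by
  have hp : p.Prime := Fact.out
  have hdeg : ∀ n : Fin 3 →₀ ℕ, H.coeff n ≠ 0 → n 0 + n 1 + n 2 = p ^ h - 1 := by
    intro n hn
    by_contra hne
    apply hn
    apply hH.coeff_eq_zero
    rwa [finsupp_degree_fin3, hcard]
  rw [Ne, CharP.cast_eq_zero_iff F p]
  refine not_dvd_multinomial hp m (hdeg m hm) fun t ht => ?_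
  refine sum_mod_eq hp.one_lt hh ht.le (hdeg m hm) ?_
  exact hdeg (Finsupp.equivFunOnFinite.symm fun i => digitShift p h t (m i))
    (coeff_digitShift_ne_zero hcard ht.le
      (mem_restrictDegree_of_totalDegree hH.totalDegree_le) hval hm fun _ => rfl)

/-! ### Membership in the code -/

/-- A prime-field valued function given by `H + f`, with `H` homogeneous of degree `q - 1`, is a
codeword: every functional `ψ` on the space of functions that vanishes on the code vanishes on it.
The polynomial `R` below records the values of `ψ` on the lines as a function of the line. -/
lemma mem_code_of_poly [Fintype F] {p h : ℕ} [Fact p.Prime] [CharP F p]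
    (hh : 1 ≤ h) (hcard : Fintype.card F = p ^ h) {H : MvPolynomial (Fin 3) F}
    (hH : H.IsHomogeneous (Fintype.card F - 1))
    (hval : ∀ v, (eval v H) ^ p = eval v H) (f : F) (c : PGPoint F → ZMod p)
    (hc : ∀ P : PGPoint F, ZMod.castHom (dvd_refl p) F (c P) = eval P.rep H + f) :
    c ∈ code p F := by
  let := Fintype.ofFinite (PGPoint F)
  set cst := ZMod.castHom (dvd_refl p) F with hcst
  by_contra hnot
  obtain ⟨ψ, hψc, hψ⟩ := Submodule.exists_dual_map_eq_bot_of_notMem hnot inferInstance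
  let w : PGPoint F → F := fun P => cst (ψ (Pi.single P 1))
  have hψw : ∀ g : PGPoint F → ZMod p, cst (ψ g) = ∑ P, w P * cst (g P) := by
    intro g
    rw [LinearMap.pi_apply_eq_sum_univ ψ g, map_sum]
    refine Finset.sum_congr rfl fun P _ => ?_
    rw [smul_eq_mul, map_mul, mul_comm]
    congr 3
    ext Q
    simp [Pi.single_apply, eq_comm]
  have hψ0 : ∀ l : PGPoint F, ∑ P, w P * cst (chi p l P) = 0 := by
    intro l
    rw [← hψw]
    have : ψ (chi p l) ∈ (code p F).map ψ :=
      Submodule.mem_map_of_mem (Submodule.subset_span ⟨l, rfl⟩)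
    rw [hψ, Submodule.mem_bot] at this
    rw [this, map_zero]
  set N := Fintype.card F - 1 with hN
  let R : MvPolynomial (Fin 3) F :=
    C (∑ P, w P) - ∑ P : PGPoint F, C (w P) * (∑ i, P.rep i • X i) ^ N
  have hRdeg : R.totalDegree ≤ N := by
    refine (totalDegree_sub _ _).trans (max_le (by rw [totalDegree_C]; exact Nat.zero_le _) ?_)
    refine totalDegree_finsetSum_le fun P _ => ?_
    have h1 : (∑ i, P.rep i • X i : MvPolynomial (Fin 3) F).IsHomogeneous 1 :=
      IsHomogeneous.sum _ _ _ fun i _ => by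
        rw [smul_eq_C_mul]; exact isHomogeneous_C_mul_X _ _
    have h2 := ((h1.pow N).C_mul (w P)).totalDegree_le
    rwa [one_mul] at h2
  have hR : R = 0 := by
    refine eq_zero_of_eval_ne_zero (mem_restrictDegree_of_totalDegree hRdeg)
      (coeff_topExp_eq_zero hRdeg) fun a ha => ?_
    rw [← hψ0 (Projectivization.mk F a ha)]
    simp only [R, map_sub, eval_C, map_sum, map_mul, map_pow, smul_eval, eval_X]
    rw [← Finset.sum_sub_distrib]
    refine Finset.sum_congr rfl fun P _ => ?_
    have h1 := cast_chi p (Projectivization.mk F a ha) P.rep P.rep_nonzero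
    rw [Projectivization.mk_rep] at h1
    rw [hcst, h1]
    obtain ⟨b, hb⟩ := Projectivization.exists_smul_eq_mk_rep F a ha
    have h2 : ∑ i, (Projectivization.mk F a ha).rep i * P.rep i =
        (b : F) * ∑ i, P.rep i * a i := by
      rw [← hb, Finset.mul_sum]
      refine Finset.sum_congr rfl fun i _ => ?_
      simp [Units.smul_def]; ring
    rw [h2, mul_pow, FiniteField.pow_card_sub_one_eq_one _ b.ne_zero]
    ring
  -- The constant term and the other coefficients of `R = 0` give the moments of `w`.
  have hW : ∑ P, w P = 0 := by
    have := congrArg (eval (0 : Fin 3 → F)) hR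
    have hN0 : N ≠ 0 := card_sub_one_pos.ne'
    simpa [R, smul_eval, hN0] using this
  have hmom : ∀ m ∈ H.support, ∑ P : PGPoint F, w P * ∏ i, P.rep i ^ m i = 0 := by
    intro m hm
    have hm0 := mem_support_iff.1 hm
    have hdm : m.sum (fun _ n => n) = N := (hH.degree_eq_sum_deg_support hm).symm
    have h1 := congrArg (coeff m) hR
    simp only [R, hW, C_0, zero_sub, coeff_neg, coeff_sum, coeff_C_mul,
      coeff_linearCombination_X_pow_of_fintype, if_pos hdm, coeff_zero, neg_eq_zero] at h1
    have h2 := multinomial_ne_zero_of_coeff_ne_zero hh hcard hH hval hm0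
    apply (mul_eq_zero.1 _).resolve_left h2
    rw [← h1, Finset.mul_sum]
    refine Finset.sum_congr rfl fun P _ => ?_
    rw [Finsupp.prod_fintype _ _ (by simp)]
    ring
  apply hψc
  apply (map_eq_zero_iff cst (RingHom.injective cst)).1
  rw [hψw]
  simp only [hc, mul_add, Finset.sum_add_distrib, ← Finset.sum_mul, hW, zero_mul, add_zero,
    eval_eq', Finset.mul_sum]
  rw [Finset.sum_comm]
  refine Finset.sum_eq_zero fun m hm => ?_
  rw [← mul_zero (coeff m H), ← hmom m hm, Finset.mul_sum]
  refine Finset.sum_congr rfl fun P _ => ?_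
  ring

/-! ### The equivalence -/

lemma isHomogeneous_line (d : F) :
    (X 1 - C d * X 0 : MvPolynomial (Fin 3) F).IsHomogeneous 1 :=
  (isHomogeneous_X _ _).sub (isHomogeneous_C_mul_X _ _)

lemma isHomogeneous_prod_lines (S : Finset F) :
    (∏ d ∈ S, (X 1 - C d * X 0) : MvPolynomial (Fin 3) F).IsHomogeneous S.card := by
  simpa using IsHomogeneous.prod S (fun d => (X 1 - C d * X 0 : MvPolynomial (Fin 3) F))
    (fun _ => 1) fun d _ => isHomogeneous_line d

/-- With no line removed the product is `∏_d (Y - dX)`, whose restriction to `X = 0` is `Y ^ q`;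
reducedness of the whole polynomial therefore kills a constant cofactor. -/
lemma eq_zero_of_homogeneous_zero [Fintype F] {G Fpol : MvPolynomial (Fin 3) F} {f : F}
    (hdeg : ∀ i, Fpol.degreeOf i ≤ Fintype.card F - 1) (hG : G.IsHomogeneous 0)
    (hF : Fpol = G * ∏ d : F, (X 1 - C d * X 0) + C f * (1 - X 0 ^ (Fintype.card F - 1))) :
    G = 0 := by
  obtain ⟨g, rfl⟩ : ∃ g, G = C g := ⟨_, totalDegree_eq_zero_iff_eq_C.1
    (Nat.le_zero.1 hG.totalDegree_le)⟩
  by_contra hg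
  have hg' : g ≠ 0 := by rintro rfl; exact hg C_0
  have hq := card_sub_one_pos (F := F)
  let φ : MvPolynomial (Fin 3) F →ₐ[F] Polynomial F := aeval ![0, Polynomial.X, 0]
  have h1 : φ Fpol = Polynomial.C g * Polynomial.X ^ Fintype.card F + Polynomial.C f := by
    rw [hF]
    simp [φ, hq.ne', ← MvPolynomial.algebraMap_eq, Polynomial.algebraMap_eq]
  have h2 : (φ Fpol).coeff (Fintype.card F) = g := by
    rw [h1]
    have : Fintype.card F ≠ 0 := Fintype.card_ne_zero
    simp [Polynomial.coeff_C, this]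
  have h3 : (φ Fpol).natDegree ≤ Fintype.card F - 1 := by
    simp only [φ]
    rw [aeval_def, eval₂_eq']
    refine Polynomial.natDegree_sum_le_of_forall_le _ _ fun m hm => ?_
    have hm1 : m 1 ≤ Fintype.card F - 1 := ((degreeOf_le_iff.1 le_rfl) m hm).trans (hdeg 1)
    rw [Fin.prod_univ_three]
    refine Polynomial.natDegree_C_mul_le _ _ |>.trans ?_
    simp only [Matrix.cons_val_zero, Matrix.cons_val_one, Matrix.cons_val]
    by_cases h0 : m 0 = 0
    · by_cases h2 : m 2 = 0
      · simpa [h0, h2] using hm1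
      · simp [h2]
    · simp [h0]
  rw [Polynomial.coeff_eq_zero_of_natDegree_lt (by omega)] at h2
  exact hg' h2.symm

open MvPolynomial in
theorem stmt11 (p h : ℕ) [Fact p.Prime] (hh : 1 ≤ h)
    (F : Type) [Field F] [Fintype F] [CharP F p] (hcard : Fintype.card F = p ^ h)
    (D : Finset F) (Fpol : MvPolynomial (Fin 3) F)
    (hdeg : ∀ i, Fpol.degreeOf i ≤ Fintype.card F - 1) :
    (∃ c ∈ code p F,
        (∀ P : PGPoint F, c P ≠ 0 → P.rep 0 = 0 ∨ ∃ d ∈ D, P.rep 1 = d * P.rep 0) ∧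
        (∀ (v : Fin 3 → F) (hv : v ≠ 0),
          MvPolynomial.eval v Fpol =
            ZMod.castHom (dvd_refl p) F (c (Projectivization.mk F v hv))) ∧
        Fpol.coeff (Finsupp.single 0 (Fintype.card F - 1) +
            Finsupp.single 1 (Fintype.card F - 1) +
            Finsupp.single 2 (Fintype.card F - 1)) = 0) ↔
      ((∀ v : Fin 3 → F,
          MvPolynomial.eval v Fpol ∈ Set.range (ZMod.castHom (dvd_refl p) F)) ∧
        ∃ G : MvPolynomial (Fin 3) F,
          (G.IsHomogeneous (D.card - 1) ∨ G = 0) ∧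
          Fpol = G * ∏ d ∈ Finset.univ \ D, (X 1 - C d * X 0) +
            C (MvPolynomial.eval (0 : Fin 3 → F) Fpol) *
              (1 - X 0 ^ (Fintype.card F - 1))) := by
  have hN := card_sub_one_pos (F := F)
  have hSD : (Finset.univ \ D).card + D.card = Fintype.card F :=
    Finset.card_sdiff_add_card_eq_card (Finset.subset_univ D)
  constructor
  · rintro ⟨c, hc, hsupp, hev, htop⟩
    obtain ⟨f, H, hH, hHv⟩ := exists_poly_of_mem_code p hc
    have hFH : Fpol = H + C (ZMod.castHom (dvd_refl p) F f) := by
      have htd : (H + C (ZMod.castHom (dvd_refl p) F f)).totalDegree ≤ Fintype.card F - 1 :=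
        (totalDegree_add _ _).trans
          (max_le hH.totalDegree_le (by rw [totalDegree_C]; exact Nat.zero_le _))
      rw [← sub_eq_zero]
      refine eq_zero_of_eval_ne_zero (Submodule.sub_mem _ (mem_restrictDegree_of_degreeOf hdeg)
        (mem_restrictDegree_of_totalDegree htd)) ?_ fun v hv => ?_
      · rw [coeff_sub, coeff_topExp_eq_zero htd, sub_zero]
        exact htop
      · rw [map_sub, map_add, eval_C, hHv v hv, hev v hv, sub_self]
    have hF0 : eval (0 : Fin 3 → F) Fpol = ZMod.castHom (dvd_refl p) F f := by
      have h0 := eval_smul_of_isHomogeneous hH 0 (0 : Fin 3 → F)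
      rw [zero_pow hN.ne', zero_mul, zero_smul] at h0
      rw [hFH, map_add, h0, eval_C, zero_add]
    refine ⟨fun v => ?_, ?_⟩
    · by_cases hv : v = 0
      · exact ⟨f, by rw [hv, hF0]⟩
      · exact ⟨_, (hev v hv).symm⟩
    set f' := eval (0 : Fin 3 → F) Fpol with hf'
    let K : MvPolynomial (Fin 3) F := H + C f' * X 0 ^ (Fintype.card F - 1)
    have hK : K.IsHomogeneous (Fintype.card F - 1) := hH.add (isHomogeneous_C_mul_X_pow _ _ _)
    have hFK : Fpol = K + C f' * (1 - X 0 ^ (Fintype.card F - 1)) := by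
      rw [hFH, hF0]; simp only [K, hF0]; ring
    have hdvd : ∏ d ∈ Finset.univ \ D, (X 1 - C d * X 0) ∣ K := by
      refine Finset.prod_dvd_of_isRelPrime (fun d _ e _ hde => isRelPrime_lines hde)
        fun d hd => ?_
      refine sub_dvd_of_aeval_eq_zero d (aeval_eq_zero_of_eval d hK fun z => ?_)
      have hv : (![1, d, z] : Fin 3 → F) ≠ 0 := fun h0 => by
        have := congrFun h0 0
        simp at this
      have hF : eval ![1, d, z] Fpol = 0 := by
        rw [hev _ hv]
        by_contra hne
        have hne' : c (Projectivization.mk F ![1, d, z] hv) ≠ 0 := fun h0 => hne (by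
          rw [h0, map_zero])
        obtain ⟨a, ha⟩ := Projectivization.exists_smul_eq_mk_rep F _ hv
        rcases hsupp _ hne' with h1 | ⟨e, he, h1⟩
        · rw [← ha] at h1
          simp [Units.smul_def] at h1
        · rw [← ha] at h1
          simp only [Units.smul_def, Pi.smul_apply, Matrix.cons_val_zero, Matrix.cons_val_one,
            smul_eq_mul, mul_one] at h1
          rw [mul_comm e] at h1
          have := mul_left_cancel₀ a.ne_zero h1
          subst this
          exact (Finset.mem_sdiff.1 hd).2 he
      rw [hFK] at hF
      simpa using hF
    obtain ⟨G, hG, hKG⟩ := exists_homogeneous_factor hK (isHomogeneous_prod_lines _) hdvd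
    refine ⟨G, ?_, by rw [← hKG]; exact hFK⟩
    have : Fintype.card F - 1 - (Finset.univ \ D).card = D.card - 1 := by omega
    rwa [this] at hG
  · rintro ⟨hval, G, hG, hFG⟩
    set f := eval (0 : Fin 3 → F) Fpol with hf
    set K := G * ∏ d ∈ Finset.univ \ D, (X 1 - C d * X 0) with hKdef
    have hK : K.IsHomogeneous (Fintype.card F - 1) := by
      by_cases hG0 : G = 0
      · rw [hKdef, hG0, zero_mul]; exact isHomogeneous_zero _ _ _
      have hG' := hG.resolve_right hG0
      have hD : D.card ≠ 0 := by
        intro hD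
        rw [hD] at hG'
        rw [Finset.card_eq_zero] at hD
        rw [hKdef, hD, Finset.sdiff_empty] at hFG
        exact hG0 (eq_zero_of_homogeneous_zero hdeg hG' hFG)
      have := hG'.mul (isHomogeneous_prod_lines (Finset.univ \ D))
      have hnum : D.card - 1 + (Finset.univ \ D).card = Fintype.card F - 1 := by omega
      rwa [hnum] at this
    let H : MvPolynomial (Fin 3) F := K - C f * X 0 ^ (Fintype.card F - 1)
    have hH : H.IsHomogeneous (Fintype.card F - 1) := hK.sub (isHomogeneous_C_mul_X_pow _ _ _)
    have hFH : Fpol = H + C f := by rw [hFG]; simp only [H]; ring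
    have hfix : ∀ a ∈ Set.range (ZMod.castHom (dvd_refl p) F), a ^ p = a := by
      rintro _ ⟨a, rfl⟩
      rw [← map_pow, ZMod.pow_card]
    have hHval : ∀ v, (eval v H) ^ p = eval v H := by
      intro v
      have h1 : eval v H = eval v Fpol - f := by rw [hFH, map_add, eval_C]; ring
      rw [h1, sub_pow_char, hfix _ (hval v), hfix _ (hval 0)]
    choose c0 hc0 using hval
    have hscale : ∀ (a : Fˣ) v, eval (a • v) H = eval v H := by
      intro a v
      rw [Units.smul_def, eval_smul_of_isHomogeneous hH,
        FiniteField.pow_card_sub_one_eq_one _ a.ne_zero, one_mul]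
    refine ⟨fun P => c0 P.rep, mem_code_of_poly hh hcard hH hHval f _ fun P => ?_, ?_, ?_, ?_⟩
    · rw [hc0]
      conv_lhs => rw [hFH]
      rw [map_add, eval_C]
    · intro P hP
      by_contra hcon
      push Not at hcon
      obtain ⟨h0, hd⟩ := hcon
      apply hP
      apply (map_eq_zero_iff (ZMod.castHom (dvd_refl p) F) (RingHom.injective _)).1
      rw [hc0, hFG, map_add, hKdef, map_mul, map_prod,
        Finset.prod_eq_zero (i := P.rep 1 / P.rep 0)]
      · simp [FiniteField.pow_card_sub_one_eq_one _ h0]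
      · rw [Finset.mem_sdiff]
        exact ⟨Finset.mem_univ _, fun hmem => hd _ hmem (by field_simp)⟩
      · simp [h0]
    · intro v hv
      obtain ⟨a, ha⟩ := Projectivization.exists_smul_eq_mk_rep F v hv
      rw [hc0, ← ha]
      rw [hFH, map_add, map_add, hscale, eval_C, eval_C]
    · refine coeff_topExp_eq_zero ?_
      rw [hFH]
      exact (totalDegree_add _ _).trans
          (max_le hH.totalDegree_le (by rw [totalDegree_C]; exact Nat.zero_le _))

end
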